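/- Let w be a permutation of {1,…,n}, let δ ∈ GPDs(w), and suppose the pipes labelled p and q cross at two distinct cross tiles s and t of δ. Then the filling δ′ obtained from δ by replacing the cross tiles at both s and t with bump tiles, and interchanging the labels p and q on all pipe segments lying between s and t, is again an element of GPDs(w); moreover δ′ has exactly two fewer cross tiles and two more bump tiles than δ, all other tile counts being unchanged. -/

import Mathlib

open scoped Classical

namespace GPDpaper

/-- Raw data of a pipe-filling of the `n × n` grid: `d.1 i j` is the (optional) pipe label on
the vertical edge at row `i`, West of column `j` (so `d.1 i 0` is on the West boundary and
`d.1 i (Fin.last n)` on the East boundary); `d.2 i j` is the label on the horizontal edge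
North of row `i` in column `j` (so `d.2 0 j` is on the North boundary and
`d.2 (Fin.last n) j` on the South boundary).  Rows are numbered from the top. -/
abbrev Pipes (n : ℕ) :=
  (Fin n → Fin (n+1) → Option (Fin n)) × (Fin (n+1) → Fin n → Option (Fin n))

variable {n : ℕ}

/-- Label on the West edge of square `(i,j)`. -/
def We (d : Pipes n) (i j : Fin n) : Option (Fin n) := d.1 i j.castSucc
/-- Label on the East edge of square `(i,j)`. -/
def Ea (d : Pipes n) (i j : Fin n) : Option (Fin n) := d.1 i j.succ
/-- Label on the North edge of square `(i,j)`. -/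
def No (d : Pipes n) (i j : Fin n) : Option (Fin n) := d.2 i.castSucc j
/-- Label on the South edge of square `(i,j)`. -/
def So (d : Pipes n) (i j : Fin n) : Option (Fin n) := d.2 i.succ j

/-- The local condition making `d` a generic pipe dream: at each square, the pair of labels
leaving through the East and North edges is either `(W,S)` (cross/horizontal/vertical/blank
tile) or `(S,W)` (bump/elbow/blank tile); moreover two edges of the same square never carry
the same pipe label. -/
def IsValid (d : Pipes n) : Prop :=
  ∀ i j : Fin n,
    ((Ea d i j, No d i j) = (We d i j, So d i j) ∨
     (Ea d i j, No d i j) = (So d i j, We d i j)) ∧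
    (We d i j = So d i j → We d i j = none)

/-- The seven generic pipe dream tiles. -/
inductive Tile where
  | cross | bump | nw | se | horiz | vert | blank
deriving DecidableEq

/-- The tile of a pipe-filling at square `(i,j)`. -/
def tile (d : Pipes n) (i j : Fin n) : Tile :=
  match We d i j, So d i j with
  | some a, some _ => if Ea d i j = some a then .cross else .bump
  | some _, none => if No d i j = none then .horiz else .nw
  | none, some _ => if No d i j = none then .se else .vert
  | none, none => .blank

/-- `d` is a generic pipe dream for the permutation `w`: it is locally valid, the pipe
entering the West boundary in row `i` is labelled `i`, no pipes meet the East and South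
boundaries, and the pipe exiting the North boundary in column `j` is labelled `w⁻¹(j)`. -/
def IsGPDof (w : Equiv.Perm (Fin n)) (d : Pipes n) : Prop :=
  IsValid d ∧
  (∀ i : Fin n, d.1 i 0 = some i) ∧
  (∀ i : Fin n, d.1 i (Fin.last n) = none) ∧
  (∀ j : Fin n, d.2 (Fin.last n) j = none) ∧
  (∀ j : Fin n, d.2 0 j = some (w.symm j))

/-- Number of tiles of `d` of a given type. -/
noncomputable def tileCount (d : Pipes n) (t : Tile) : ℕ :=
  (Finset.univ.filter (fun p : Fin n × Fin n => tile d p.1 p.2 = t)).card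

/-- The pipes labelled `p` and `q` cross at the tile `(i,j)`. -/
def CrossesAt (d : Pipes n) (p q : Fin n) (i j : Fin n) : Prop :=
  tile d i j = .cross ∧
  ((We d i j = some p ∧ So d i j = some q) ∨ (We d i j = some q ∧ So d i j = some p))

/-- The number of tiles at which the pipes labelled `p` and `q` cross. -/
noncomputable def crossCount (d : Pipes n) (p q : Fin n) : ℕ :=
  (Finset.univ.filter (fun ij : Fin n × Fin n => CrossesAt d p q ij.1 ij.2)).card

/-- No two pipes of `d` cross each other at more than one tile. -/
def NoDoubleCross (d : Pipes n) : Prop := ∀ p q : Fin n, crossCount d p q ≤ 1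

/-- Number of inversions (Coxeter length) of a permutation. -/
def invCount (w : Equiv.Perm (Fin n)) : ℕ :=
  (Finset.univ.filter (fun p : Fin n × Fin n => p.1 < p.2 ∧ w p.2 < w p.1)).card

/-- Classic pipe dream (in 1-indexed terms: crosses and bumps for `i+j ≤ n`, NW-elbows on the
antidiagonal `i+j = n+1`, blanks below, and no two pipes crossing twice). -/
def IsClassic (d : Pipes n) : Prop :=
  (∀ i j : Fin n, (i : ℕ) + (j : ℕ) + 2 ≤ n → tile d i j = .cross ∨ tile d i j = .bump) ∧
  (∀ i j : Fin n, (i : ℕ) + (j : ℕ) + 2 = n + 1 → tile d i j = .nw) ∧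
  (∀ i j : Fin n, (i : ℕ) + (j : ℕ) + 2 > n + 1 → tile d i j = .blank) ∧
  NoDoubleCross d

/-- Bumpless-reduced: no bump tiles and no two pipes crossing twice. -/
def IsBumplessReduced (d : Pipes n) : Prop :=
  (∀ i j : Fin n, tile d i j ≠ .bump) ∧ NoDoubleCross d


/-- The filling obtained from `d` by applying the label-exchange `p ↔ q` to every edge lying
(strictly along the pipes) between the two crossing tiles `s` and `t`.  Since every pipe moves
East or North at each step, the quantity `j - i` (column minus row of the square being entered)
increases by exactly `1` along each pipe, so the edges strictly between `s` and `t` along the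
pipes `p` and `q` are exactly the edges bearing label `p` or `q` whose "level" lies in the
half-open interval `(min(λ s, λ t), max(λ s, λ t)]`, where `λ (i,j) = j - i`; the level of the
vertical edge `(i,j)` is `j - i` and that of the horizontal edge `(i,j)` is `j - i + 1`. -/
noncomputable def swapBetween (d : Pipes n) (p q : Fin n) (s t : Fin n × Fin n) : Pipes n :=
  let lo : ℤ := min (((s.2 : ℕ) : ℤ) - ((s.1 : ℕ) : ℤ)) (((t.2 : ℕ) : ℤ) - ((t.1 : ℕ) : ℤ))
  let hi : ℤ := max (((s.2 : ℕ) : ℤ) - ((s.1 : ℕ) : ℤ)) (((t.2 : ℕ) : ℤ) - ((t.1 : ℕ) : ℤ))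
  (fun i j =>
      if lo < ((j : ℕ) : ℤ) - ((i : ℕ) : ℤ) ∧ ((j : ℕ) : ℤ) - ((i : ℕ) : ℤ) ≤ hi then
        (d.1 i j).map (Equiv.swap p q) else d.1 i j,
   fun i j =>
      if lo < ((j : ℕ) : ℤ) - ((i : ℕ) : ℤ) + 1 ∧ ((j : ℕ) : ℤ) - ((i : ℕ) : ℤ) + 1 ≤ hi then
        (d.2 i j).map (Equiv.swap p q) else d.2 i j)

def VE (d : Pipes n) (a : Fin n) (i j : ℕ) : Prop :=
  ∃ (hi : i < n) (hj : j < n + 1), d.1 ⟨i, hi⟩ ⟨j, hj⟩ = some a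

def HE (d : Pipes n) (a : Fin n) (i j : ℕ) : Prop :=
  ∃ (hi : i < n + 1) (hj : j < n), d.2 ⟨i, hi⟩ ⟨j, hj⟩ = some a

/-- incoming label at a square -/
def Inp (d : Pipes n) (a : Fin n) (i j : Fin n) : Prop := We d i j = some a ∨ So d i j = some a

theorem VE_zero {w : Equiv.Perm (Fin n)} {d : Pipes n} (hd : IsGPDof w d) {a : Fin n} {i : ℕ}
    (h : VE d a i 0) : i = a := by
  obtain ⟨hi, hj, h⟩ := h
  have := hd.2.1 ⟨i, hi⟩
  have h2 : d.1 ⟨i, hi⟩ ⟨0, hj⟩ = d.1 ⟨i, hi⟩ 0 := rfl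
  rw [h2, this] at h
  simp at h
  rw [← h]

theorem VE_lt {w : Equiv.Perm (Fin n)} {d : Pipes n} (hd : IsGPDof w d) {a : Fin n} {i j : ℕ}
    (h : VE d a i j) : i < n ∧ j < n := by
  obtain ⟨hi, hj, h⟩ := h
  refine ⟨hi, ?_⟩
  by_contra hc
  obtain rfl : j = n := by omega
  have h1 := hd.2.2.1 ⟨i, hi⟩
  have h2 : d.1 ⟨i, hi⟩ ⟨j, hj⟩ = d.1 ⟨i, hi⟩ (Fin.last j) := rfl
  rw [h2, h1] at h
  simp at h

theorem HE_lt {w : Equiv.Perm (Fin n)} {d : Pipes n} (hd : IsGPDof w d) {a : Fin n} {i j : ℕ}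
    (h : HE d a i j) : i < n ∧ j < n := by
  obtain ⟨hi, hj, h⟩ := h
  refine ⟨?_, hj⟩
  by_contra hc
  obtain rfl : i = n := by omega
  have h1 := hd.2.2.2.1 ⟨j, hj⟩
  have h2 : d.2 ⟨i, hi⟩ ⟨j, hj⟩ = d.2 (Fin.last i) ⟨j, hj⟩ := rfl
  rw [h2, h1] at h
  simp at h

theorem sq_facts {d : Pipes n} (hd : IsValid d) (a i j : Fin n) :
    ((Ea d i j = some a ∨ No d i j = some a) ↔ (We d i j = some a ∨ So d i j = some a)) ∧
    ¬ (Ea d i j = some a ∧ No d i j = some a) ∧ ¬ (We d i j = some a ∧ So d i j = some a) := by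
  obtain ⟨h1, h2⟩ := hd i j
  simp only [Prod.mk.injEq] at h1
  grind

theorem VE_step {w : Equiv.Perm (Fin n)} {d : Pipes n} (hd : IsGPDof w d) {a : Fin n} {i j : ℕ}
    (h : VE d a i (j+1)) : ¬ HE d a i j ∧
      ((VE d a i j ∧ ¬ HE d a (i+1) j) ∨ (HE d a (i+1) j ∧ ¬ VE d a i j)) := by
  obtain ⟨hi, hj, h⟩ := h
  have f := sq_facts hd.1 a ⟨i, hi⟩ ⟨j, by omega⟩
  simp only [Ea, No, We, So, Fin.succ_mk, Fin.castSucc_mk] at f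
  have e1 : VE d a i j ↔ d.1 ⟨i, hi⟩ ⟨j, by omega⟩ = some a :=
    ⟨fun ⟨_, _, h⟩ => h, fun h => ⟨_, _, h⟩⟩
  have e2 : HE d a i j ↔ d.2 ⟨i, by omega⟩ ⟨j, by omega⟩ = some a :=
    ⟨fun ⟨_, _, h⟩ => h, fun h => ⟨_, _, h⟩⟩
  have e3 : HE d a (i+1) j ↔ d.2 ⟨i+1, by omega⟩ ⟨j, by omega⟩ = some a :=
    ⟨fun ⟨_, _, h⟩ => h, fun h => ⟨_, _, h⟩⟩
  rw [e1, e2, e3]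
  tauto

theorem HE_step {w : Equiv.Perm (Fin n)} {d : Pipes n} (hd : IsGPDof w d) {a : Fin n} {i j : ℕ}
    (h : HE d a i j) : ¬ VE d a i (j+1) ∧
      ((VE d a i j ∧ ¬ HE d a (i+1) j) ∨ (HE d a (i+1) j ∧ ¬ VE d a i j)) := by
  have hi := (HE_lt hd h).1
  obtain ⟨hi', hj, h⟩ := h
  have f := sq_facts hd.1 a ⟨i, hi⟩ ⟨j, by omega⟩
  simp only [Ea, No, We, So, Fin.succ_mk, Fin.castSucc_mk] at f
  have e1 : VE d a i j ↔ d.1 ⟨i, hi⟩ ⟨j, by omega⟩ = some a :=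
    ⟨fun ⟨_, _, h⟩ => h, fun h => ⟨_, _, h⟩⟩
  have e2 : VE d a i (j+1) ↔ d.1 ⟨i, by omega⟩ ⟨j+1, by omega⟩ = some a :=
    ⟨fun ⟨_, _, h⟩ => h, fun h => ⟨_, _, h⟩⟩
  have e3 : HE d a (i+1) j ↔ d.2 ⟨i+1, by omega⟩ ⟨j, by omega⟩ = some a :=
    ⟨fun ⟨_, _, h⟩ => h, fun h => ⟨_, _, h⟩⟩
  rw [e1, e2, e3]
  tauto

theorem lower {w : Equiv.Perm (Fin n)} {d : Pipes n} (hd : IsGPDof w d) {a : Fin n} (m : ℕ) :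
    (∀ i j, VE d a i j → m + i = j + n → i ≤ j + a) ∧
    (∀ i j, HE d a i j → m + i = j + 1 + n → i ≤ j + 1 + a) := by
  induction m with
  | zero =>
    refine ⟨fun i j h e => ?_, fun i j h e => ?_⟩
    · have := VE_lt hd h; omega
    · have := HE_lt hd h; omega
  | succ m ih =>
    refine ⟨fun i j h e => ?_, fun i j h e => ?_⟩
    · rcases j with _ | j
      · have := VE_zero hd h; omega
      · rcases (VE_step hd h).2 with h | h
        · have := ih.1 _ _ h.1 (by omega); omega
        · have := ih.2 _ _ h.1 (by omega); omega
    · rcases (HE_step hd h).2 with h | h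
      · have := ih.1 _ _ h.1 (by omega); omega
      · have := ih.2 _ _ h.1 (by omega); omega

/-- Every non-initial edge at level `m+1` comes from a square. -/
theorem uniq {w : Equiv.Perm (Fin n)} {d : Pipes n} (hd : IsGPDof w d) {a : Fin n} (m : ℕ) :
    (∀ i j i' j', VE d a i j → m + i = j + n → VE d a i' j' → m + i' = j' + n → i = i') ∧
    (∀ i j i' j', HE d a i j → m + i = j + 1 + n → HE d a i' j' → m + i' = j' + 1 + n → i = i') ∧
    (∀ i j i' j', VE d a i j → m + i = j + n → HE d a i' j' → m + i' = j' + 1 + n → False) := by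
  induction m with
  | zero =>
    refine ⟨fun i j _ _ h e => ?_, fun i j _ _ h e => ?_, fun i j _ _ h e => ?_⟩
    · have := VE_lt hd h; omega
    · have := HE_lt hd h; omega
    · have := VE_lt hd h; omega
  | succ m ih =>
    obtain ⟨u1, u2, u3⟩ := ih
    obtain ⟨l1, l2⟩ := lower hd (a := a) m
    refine ⟨fun i j i' j' h e h' e' => ?_, fun i j i' j' h e h' e' => ?_,
      fun i j i' j' h e h' e' => ?_⟩
    · rcases j with _ | j
      · have h0 := VE_zero hd h
        rcases j' with _ | j'
        · omega
        · rcases (VE_step hd h').2 with h | h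
          · have := l1 _ _ h.1 (by omega); omega
          · have := l2 _ _ h.1 (by omega); omega
      · rcases j' with _ | j'
        · have h0 := VE_zero hd h'
          rcases (VE_step hd h).2 with h | h
          · have := l1 _ _ h.1 (by omega); omega
          · have := l2 _ _ h.1 (by omega); omega
        · rcases (VE_step hd h).2 with h | h <;> rcases (VE_step hd h').2 with h' | h'
          · exact u1 _ _ _ _ h.1 (by omega) h'.1 (by omega)
          · exact (u3 _ _ _ _ h.1 (by omega) h'.1 (by omega)).elim
          · exact (u3 _ _ _ _ h'.1 (by omega) h.1 (by omega)).elim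
          · have := u2 _ _ _ _ h.1 (by omega) h'.1 (by omega); omega
    · rcases (HE_step hd h).2 with h | h <;> rcases (HE_step hd h').2 with h' | h'
      · exact u1 _ _ _ _ h.1 (by omega) h'.1 (by omega)
      · exact (u3 _ _ _ _ h.1 (by omega) h'.1 (by omega)).elim
      · exact (u3 _ _ _ _ h'.1 (by omega) h.1 (by omega)).elim
      · have := u2 _ _ _ _ h.1 (by omega) h'.1 (by omega); omega
    · rcases j with _ | j
      · have h0 := VE_zero hd h
        rcases (HE_step hd h').2 with h | h
        · have := l1 _ _ h.1 (by omega); omega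
        · have := l2 _ _ h.1 (by omega); omega
      · have hne := (VE_step hd h).1
        have key : i = i' → False := by
          intro hh
          have : j = j' := by omega
          subst hh; subst this
          exact hne h'
        rcases (VE_step hd h).2 with h | h <;> rcases (HE_step hd h').2 with h' | h'
        · exact key (u1 _ _ _ _ h.1 (by omega) h'.1 (by omega))
        · exact (u3 _ _ _ _ h.1 (by omega) h'.1 (by omega)).elim
        · exact (u3 _ _ _ _ h'.1 (by omega) h.1 (by omega)).elim
        · have := u2 _ _ _ _ h.1 (by omega) h'.1 (by omega)
          exact key (by omega)

theorem north {w : Equiv.Perm (Fin n)} {d : Pipes n} (hd : IsGPDof w d) {a : Fin n} {k : ℕ}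
    (hk : HE d a 0 k) (m : ℕ) (hm : k + 1 + n ≤ m) :
    (∀ i j, VE d a i j → m + i = j + n → False) ∧
    (∀ i j, HE d a (i+1) j → m + (i+1) = j + 1 + n → False) := by
  induction m, hm using Nat.le_induction with
  | base =>
    obtain ⟨u1, u2, u3⟩ := uniq hd (a := a) (k + 1 + n)
    refine ⟨fun i j h e => u3 _ _ _ _ h e hk (by omega), fun i j h e => ?_⟩
    have := u2 _ _ _ _ h e hk (by omega)
    omega
  | succ m hm ih =>
    refine ⟨fun i j h e => ?_, fun i j h e => ?_⟩
    · rcases j with _ | j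
      · omega
      · rcases (VE_step hd h).2 with h | h
        · exact ih.1 _ _ h.1 (by omega)
        · exact ih.2 _ _ h.1 (by omega)
    · rcases (HE_step hd h).2 with h | h
      · exact ih.1 _ _ h.1 (by omega)
      · exact ih.2 _ _ h.1 (by omega)

theorem Inp_iff {d : Pipes n} {a i j : Fin n} (h : Inp d a i j) :
    VE d a i j ∨ HE d a (i+1) j := by
  rcases h with h | h
  · exact Or.inl ⟨i.2, by omega, h⟩
  · exact Or.inr ⟨by omega, j.2, h⟩

theorem Inp_uniq {w : Equiv.Perm (Fin n)} {d : Pipes n} (hd : IsGPDof w d) {a i j i' j' : Fin n}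
    (h : Inp d a i j) (h' : Inp d a i' j') (e : (j:ℤ) - (i:ℤ) = (j':ℤ) - (i':ℤ)) :
    i = i' ∧ j = j' := by
  have : (i:ℕ) = i' := by
    obtain ⟨u1, u2, u3⟩ := uniq hd (a := a) (j + n - i)
    rcases Inp_iff h with h | h <;> rcases Inp_iff h' with h' | h'
    · exact u1 _ _ _ _ h (by omega) h' (by omega)
    · exact (u3 _ _ _ _ h (by omega) h' (by omega)).elim
    · exact (u3 _ _ _ _ h' (by omega) h (by omega)).elim
    · have := u2 _ _ _ _ h (by omega) h' (by omega)
      omega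
  constructor <;> ext <;> omega

theorem Inp_west {w : Equiv.Perm (Fin n)} {d : Pipes n} (hd : IsGPDof w d) {a i j : Fin n}
    (h : Inp d a i j) : -(a:ℤ) ≤ (j:ℤ) - (i:ℤ) := by
  obtain ⟨l1, l2⟩ := lower hd (a := a) (j + n - i)
  rcases Inp_iff h with h | h
  · have := l1 _ _ h (by omega); omega
  · have := l2 _ _ h (by omega); omega

theorem Inp_north {w : Equiv.Perm (Fin n)} {d : Pipes n} (hd : IsGPDof w d) {a i j k : Fin n}
    (h : Inp d a i j) (hk : d.2 0 k = some a) : (j:ℤ) - (i:ℤ) < (k:ℤ) + 1 := by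
  by_contra hc
  have hk' : HE d a 0 k := ⟨by omega, k.2, hk⟩
  obtain ⟨l1, l2⟩ := north hd hk' (j + n - i) (by omega)
  rcases Inp_iff h with h | h
  · exact l1 _ _ h (by omega)
  · exact l2 _ _ h (by omega)

theorem swapBetween_comm (d : Pipes n) (p q : Fin n) (s t : Fin n × Fin n) :
    swapBetween d p q s t = swapBetween d p q t s := by
  unfold swapBetween
  simp only [min_comm, max_comm]

def tl (W S E N : Option (Fin n)) : Tile :=
  match W, S with
  | some a, some _ => if E = some a then .cross else .bump
  | some _, none => if N = none then .horiz else .nw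
  | none, some _ => if N = none then .se else .vert
  | none, none => .blank

theorem tile_eq (d : Pipes n) (i j : Fin n) :
    tile d i j = tl (We d i j) (So d i j) (Ea d i j) (No d i j) := rfl

theorem tl_map (σ : Equiv.Perm (Fin n)) (W S E N : Option (Fin n)) :
    tl (W.map σ) (S.map σ) (E.map σ) (N.map σ) = tl W S E N := by
  cases W <;> cases S <;> cases E <;> cases N <;> simp [tl]

theorem map_fix {p q : Fin n} {x : Option (Fin n)} (h1 : x ≠ some p) (h2 : x ≠ some q) :
    x.map (Equiv.swap p q) = x := by
  cases x with
  | none => rfl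
  | some a =>
    simp only [Option.map_some]
    rw [Equiv.swap_apply_of_ne_of_ne] <;> grind

def Loc (d : Pipes n) (i j : Fin n) : Prop :=
    ((Ea d i j, No d i j) = (We d i j, So d i j) ∨
     (Ea d i j, No d i j) = (So d i j, We d i j)) ∧
    (We d i j = So d i j → We d i j = none)

theorem cross_facts {d : Pipes n} (hd : IsValid d) {p q i j : Fin n} (hpq : p ≠ q)
    (h : CrossesAt d p q i j) : Ea d i j = We d i j ∧ No d i j = So d i j ∧
    ((We d i j = some p ∧ So d i j = some q) ∨ (We d i j = some q ∧ So d i j = some p)) := by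
  obtain ⟨h0, h1⟩ := h
  obtain ⟨h2, h3⟩ := hd i j
  rw [tile_eq] at h0
  refine ⟨?_, ?_, h1⟩ <;> rcases h1 with ⟨e1, e2⟩ | ⟨e1, e2⟩ <;>
    simp only [e1, e2, tl, Prod.mk.injEq] at h0 h2 ⊢ <;> grind

theorem sw_edges (d : Pipes n) (p q : Fin n) (s t : Fin n × Fin n)
    (hlt : (s.2:ℤ) - (s.1:ℤ) < (t.2:ℤ) - (t.1:ℤ)) (i j : Fin n) :
    (We (swapBetween d p q s t) i j =
      if (s.2:ℤ) - (s.1:ℤ) < (j:ℤ) - (i:ℤ) ∧ (j:ℤ) - (i:ℤ) ≤ (t.2:ℤ) - (t.1:ℤ) then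
        (We d i j).map (Equiv.swap p q) else We d i j) ∧
    (So (swapBetween d p q s t) i j =
      if (s.2:ℤ) - (s.1:ℤ) < (j:ℤ) - (i:ℤ) ∧ (j:ℤ) - (i:ℤ) ≤ (t.2:ℤ) - (t.1:ℤ) then
        (So d i j).map (Equiv.swap p q) else So d i j) ∧
    (Ea (swapBetween d p q s t) i j =
      if (s.2:ℤ) - (s.1:ℤ) < (j:ℤ) - (i:ℤ) + 1 ∧ (j:ℤ) - (i:ℤ) + 1 ≤ (t.2:ℤ) - (t.1:ℤ) then
        (Ea d i j).map (Equiv.swap p q) else Ea d i j) ∧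
    (No (swapBetween d p q s t) i j =
      if (s.2:ℤ) - (s.1:ℤ) < (j:ℤ) - (i:ℤ) + 1 ∧ (j:ℤ) - (i:ℤ) + 1 ≤ (t.2:ℤ) - (t.1:ℤ) then
        (No d i j).map (Equiv.swap p q) else No d i j) := by
  simp only [We, So, Ea, No, swapBetween, min_eq_left hlt.le, max_eq_right hlt.le,
    Fin.val_castSucc, Fin.val_succ, Nat.cast_add, Nat.cast_one]
  refine ⟨trivial, ?_, ?_, trivial⟩
  · have : (j:ℤ) - ((i:ℤ) + 1) + 1 = (j:ℤ) - i := by ring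
    rw [this]
  · have : (j:ℤ) + 1 - (i:ℤ) = (j:ℤ) - i + 1 := by ring
    rw [this]

theorem loc_swap {w : Equiv.Perm (Fin n)} {d : Pipes n}
    (hd : IsGPDof w d) {p q : Fin n} (hpq : p ≠ q) {s t : Fin n × Fin n}
    (hlt : (s.2:ℤ) - (s.1:ℤ) < (t.2:ℤ) - (t.1:ℤ))
    (hs : CrossesAt d p q s.1 s.2) (ht : CrossesAt d p q t.1 t.2) (i j : Fin n) :
    Loc (swapBetween d p q s t) i j ∧ tile (swapBetween d p q s t) i j =
      if (i, j) = s ∨ (i, j) = t then Tile.bump else tile d i j := by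
  obtain ⟨eW, eS, eE, eN⟩ := sw_edges d p q s t hlt i j
  have loc := hd.1 i j
  by_cases h1 : (i, j) = s
  · subst h1
    obtain ⟨c1, c2, c3⟩ := cross_facts hd.1 hpq hs
    simp only at hlt eW eS eE eN c1 c2 c3
    rw [if_neg (by omega)] at eW eS
    rw [if_pos (by omega)] at eE eN
    rw [tile_eq, Loc, eW, eS, eE, eN, c1, c2]
    rcases c3 with ⟨c3, c4⟩ | ⟨c3, c4⟩ <;> simp [c3, c4, tl, hpq, hpq.symm]
  by_cases h2 : (i, j) = t
  · subst h2
    obtain ⟨c1, c2, c3⟩ := cross_facts hd.1 hpq ht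
    simp only at hlt eW eS eE eN c1 c2 c3
    rw [if_pos (by omega)] at eW eS
    rw [if_neg (by omega)] at eE eN
    rw [tile_eq, Loc, eW, eS, eE, eN, c1, c2]
    rcases c3 with ⟨c3, c4⟩ | ⟨c3, c4⟩ <;> simp [c3, c4, tl, hpq, hpq.symm]
  rw [if_neg (by tauto), tile_eq, tile_eq]
  have sp : ∀ a, a = p ∨ a = q → Inp d a s.1 s.2 := by
    obtain ⟨c1, c2, c3⟩ := cross_facts hd.1 hpq hs
    unfold Inp; grind
  have tp : ∀ a, a = p ∨ a = q → Inp d a t.1 t.2 := by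
    obtain ⟨c1, c2, c3⟩ := cross_facts hd.1 hpq ht
    unfold Inp; grind
  have fixed : (j:ℤ) - (i:ℤ) = (s.2:ℤ) - (s.1:ℤ) ∨ (j:ℤ) - (i:ℤ) = (t.2:ℤ) - (t.1:ℤ) →
      ∀ a, a = p ∨ a = q → ¬ Inp d a i j := by
    intro hh a ha hi
    rcases hh with hh | hh
    · have := Inp_uniq hd hi (sp a ha) hh
      exact h1 (Prod.ext this.1 this.2)
    · have := Inp_uniq hd hi (tp a ha) hh
      exact h2 (Prod.ext this.1 this.2)
  by_cases hb : (j:ℤ) - (i:ℤ) = (s.2:ℤ) - (s.1:ℤ) ∨ (j:ℤ) - (i:ℤ) = (t.2:ℤ) - (t.1:ℤ)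
  · have fp := fixed hb p (Or.inl rfl)
    have fq := fixed hb q (Or.inr rfl)
    have gp := (sq_facts hd.1 p i j).1
    have gq := (sq_facts hd.1 q i j).1
    unfold Inp at fp fq
    rw [← gp] at fp
    rw [← gq] at fq
    rw [not_or] at fp fq
    have bp : ¬ (We d i j = some p ∨ So d i j = some p) := fixed hb p (Or.inl rfl)
    have bq : ¬ (We d i j = some q ∨ So d i j = some q) := fixed hb q (Or.inr rfl)
    rw [not_or] at bp bq
    rw [map_fix bp.1 bq.1, ite_self] at eW
    rw [map_fix bp.2 bq.2, ite_self] at eS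
    rw [map_fix fp.1 fq.1, ite_self] at eE
    rw [map_fix fp.2 fq.2, ite_self] at eN
    rw [Loc, eW, eS, eE, eN]
    exact ⟨loc, rfl⟩
  · by_cases hc : (s.2:ℤ) - (s.1:ℤ) < (j:ℤ) - (i:ℤ) ∧ (j:ℤ) - (i:ℤ) ≤ (t.2:ℤ) - (t.1:ℤ)
    · rw [if_pos hc] at eW eS
      rw [if_pos (by omega)] at eE eN
      rw [Loc, eW, eS, eE, eN, tl_map]
      refine ⟨?_, rfl⟩
      have inj : Function.Injective (Option.map (Equiv.swap p q)) :=
        Option.map_injective (Equiv.swap p q).injective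
      refine ⟨?_, fun h => by rw [loc.2 (inj h)]; rfl⟩
      rcases loc.1 with h | h <;> simp only [Prod.mk.injEq] at h <;> rw [h.1, h.2] <;> simp
    · rw [if_neg hc] at eW eS
      rw [if_neg (by omega)] at eE eN
      rw [Loc, eW, eS, eE, eN]
      exact ⟨loc, rfl⟩

theorem main_lt {w : Equiv.Perm (Fin n)} {d : Pipes n}
    (hd : IsGPDof w d) {p q : Fin n} (hpq : p ≠ q) {s t : Fin n × Fin n}
    (hlt : (s.2:ℤ) - (s.1:ℤ) < (t.2:ℤ) - (t.1:ℤ))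
    (hs : CrossesAt d p q s.1 s.2) (ht : CrossesAt d p q t.1 t.2) :
    IsGPDof w (swapBetween d p q s t) ∧
    tileCount d .cross = tileCount (swapBetween d p q s t) .cross + 2 ∧
    tileCount (swapBetween d p q s t) .bump = tileCount d .bump + 2 ∧
    (∀ τ : Tile, τ ≠ .cross → τ ≠ .bump →
      tileCount (swapBetween d p q s t) τ = tileCount d τ) := by
  have sp : ∀ a, a = p ∨ a = q → Inp d a s.1 s.2 := by
    obtain ⟨c1, c2, c3⟩ := cross_facts hd.1 hpq hs
    unfold Inp; grind
  have tp : ∀ a, a = p ∨ a = q → Inp d a t.1 t.2 := by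
    obtain ⟨c1, c2, c3⟩ := cross_facts hd.1 hpq ht
    unfold Inp; grind
  have hst : s ≠ t := by rintro rfl; omega
  have L := loc_swap hd hpq hlt hs ht
  have T : ∀ x : Fin n × Fin n, tile (swapBetween d p q s t) x.1 x.2 =
      if x = s ∨ x = t then Tile.bump else tile d x.1 x.2 := fun x => (L x.1 x.2).2
  refine ⟨⟨fun i j => (L i j).1, fun i => ?_, fun i => ?_, fun j => ?_, fun j => ?_⟩, ?_, ?_, ?_⟩
  · simp only [swapBetween, min_eq_left hlt.le, max_eq_right hlt.le, hd.2.1 i]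
    split_ifs with hc
    · apply map_fix
      · rintro h
        have := Inp_west hd (sp p (Or.inl rfl))
        simp at h hc; subst h; omega
      · rintro h
        have := Inp_west hd (sp q (Or.inr rfl))
        simp at h hc; subst h; omega
    · rfl
  · simp only [swapBetween, hd.2.2.1 i, Option.map_none, ite_self]
  · simp only [swapBetween, hd.2.2.2.1 j, Option.map_none, ite_self]
  · simp only [swapBetween, min_eq_left hlt.le, max_eq_right hlt.le, hd.2.2.2.2 j]
    split_ifs with hc
    · rw [← hd.2.2.2.2 j]
      apply map_fix
      · intro h
        have := Inp_north hd (tp p (Or.inl rfl)) h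
        simp at hc; omega
      · intro h
        have := Inp_north hd (tp q (Or.inr rfl)) h
        simp at hc; omega
    · rfl
  · have : (Finset.univ.filter (fun x : Fin n × Fin n => tile d x.1 x.2 = .cross)) =
        insert s (insert t (Finset.univ.filter
          (fun x : Fin n × Fin n => tile (swapBetween d p q s t) x.1 x.2 = .cross))) := by
      ext x
      simp only [Finset.mem_filter, Finset.mem_univ, true_and, Finset.mem_insert, T]
      by_cases h1 : x = s
      · subst h1; simp [hs.1]
      by_cases h2 : x = t
      · subst h2; simp [ht.1]
      simp [h1, h2]
    unfold tileCount
    rw [this, Finset.card_insert_of_notMem, Finset.card_insert_of_notMem]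
    · simp [T]
    · simp [T, hst]
  · have : (Finset.univ.filter (fun x : Fin n × Fin n =>
          tile (swapBetween d p q s t) x.1 x.2 = .bump)) =
        insert s (insert t (Finset.univ.filter
          (fun x : Fin n × Fin n => tile d x.1 x.2 = .bump))) := by
      ext x
      simp only [Finset.mem_filter, Finset.mem_univ, true_and, Finset.mem_insert, T]
      by_cases h1 : x = s
      · simp [h1]
      by_cases h2 : x = t
      · simp [h2]
      simp [h1, h2]
    unfold tileCount
    rw [this, Finset.card_insert_of_notMem, Finset.card_insert_of_notMem]
    · simp [ht.1]
    · simp [hs.1, hst]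
  · intro τ h1 h2
    unfold tileCount
    congr 1
    ext x
    simp only [Finset.mem_filter, Finset.mem_univ, true_and, T]
    split_ifs with h
    · rcases h with rfl | rfl
      · simp [hs.1, h1.symm, h2.symm]
      · simp [ht.1, h1.symm, h2.symm]
    · rfl

theorem statement9 {n : ℕ} (hn : 1 ≤ n) (w : Equiv.Perm (Fin n)) (d : Pipes n)
    (hd : IsGPDof w d) (p q : Fin n) (hpq : p ≠ q) (s t : Fin n × Fin n) (hst : s ≠ t)
    (hs : CrossesAt d p q s.1 s.2) (ht : CrossesAt d p q t.1 t.2) :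
    IsGPDof w (swapBetween d p q s t) ∧
    tileCount d .cross = tileCount (swapBetween d p q s t) .cross + 2 ∧
    tileCount (swapBetween d p q s t) .bump = tileCount d .bump + 2 ∧
    (∀ τ : Tile, τ ≠ .cross → τ ≠ .bump →
      tileCount (swapBetween d p q s t) τ = tileCount d τ) := by
  rcases lt_trichotomy ((s.2:ℤ) - (s.1:ℤ)) ((t.2:ℤ) - (t.1:ℤ)) with h | h | h
  · exact main_lt hd hpq h hs ht
  · exfalso
    have sp : Inp d p s.1 s.2 := by
      obtain ⟨c1, c2, c3⟩ := cross_facts hd.1 hpq hs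
      unfold Inp; grind
    have tp : Inp d p t.1 t.2 := by
      obtain ⟨c1, c2, c3⟩ := cross_facts hd.1 hpq ht
      unfold Inp; grind
    have := Inp_uniq hd sp tp h
    exact hst (Prod.ext this.1 this.2)
  · rw [swapBetween_comm]
    exact main_lt hd hpq h ht hs

end GPDpaper
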